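/- arXiv:1412.8525 — 2 statements merged into one kernel-verified Lean document; each statement's English description precedes it below -/
import Mathlib

section
/- Let A be a type and F : Type u ⥤ Type u an endofunctor, and let E be the exponential functor with E.obj X = (A → F.obj X), acting on a function f by postcomposition with F.map f. Suppose the family of predicate liftings (Λ i)_{i ∈ I} is separating for F. Then the family of liftings indexed by pairs (i, a) with i ∈ I and a ∈ A, sending a type X and U : Set X to { g : A → F.obj X | g a ∈ Λ i X U }, is separating for E. -/
open CategoryTheory

universe u v

/-- A predicate lifting for an endofunctor `F : Type u ⥤ Type u`: a family of maps
`Set X → Set (F.obj X)` natural with respect to preimages. -/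
def IsPredLifting (F : Type u ⥤ Type u)
    (Λ : (X : Type u) → Set X → Set (F.obj X)) : Prop :=
  ∀ (X Y : Type u) (f : X → Y) (U : Set Y),
    Λ X (f ⁻¹' U) = F.map (↾f) ⁻¹' (Λ Y U)

/-- A family of predicate liftings is separating if any two distinct elements of `F.obj X`
are distinguished by some lifting applied to some subset. -/
def IsSeparating (F : Type u ⥤ Type u) {ι : Type v}
    (Λ : ι → (X : Type u) → Set X → Set (F.obj X)) : Prop :=
  ∀ (X : Type u) (x y : F.obj X), x ≠ y →
    ∃ (i : ι) (U : Set X), Xor' (x ∈ Λ i X U) (y ∈ Λ i X U)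

/-- The exponential functor `X ↦ (A → F.obj X)`. -/
def expFunctor (A : Type u) (F : Type u ⥤ Type u) : Type u ⥤ Type u where
  obj X := A → F.obj X
  map f := ↾fun g a => F.map f (g a)
  map_id X := by ext g a; simp
  map_comp f g := by ext h a; simp

/-- For the exponential functor, `τ a` is evaluation at `a`. -/
theorem isSeparating_exp_general {A ι : Type*} {F G : Type u ⥤ Type u}
    {Λ : ι → (X : Type u) → Set X → Set (F.obj X)} (hsep : IsSeparating F Λ)
    (τ : A → (X : Type u) → G.obj X → F.obj X)
    (hτ : ∀ X : Type u, Function.Injective fun x a => τ a X x) :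
    IsSeparating G (fun (p : ι × A) X U => τ p.2 X ⁻¹' Λ p.1 X U) := by
  intro X x y hxy
  obtain ⟨a, ha⟩ : ∃ a, τ a X x ≠ τ a X y := Function.ne_iff.mp ((hτ X).ne hxy)
  obtain ⟨i, U, hU⟩ := hsep X _ _ ha
  exact ⟨(i, a), U, hU⟩

theorem isSeparating_exp (A : Type u) (F : Type u ⥤ Type u)
    {ι : Type v}
    (Λ : ι → (X : Type u) → Set X → Set (F.obj X))
    (hlift : ∀ i : ι, IsPredLifting F (Λ i))
    (hsep : IsSeparating F Λ) :
    IsSeparating (expFunctor A F)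
      (fun (p : ι × A) (X : Type u) (U : Set X) =>
        { g : A → F.obj X | g p.2 ∈ Λ p.1 X U }) :=
  isSeparating_exp_general (G := expFunctor A F) hsep (fun a X (g : A → F.obj X) => g a)
    fun _ => Function.injective_id
end

section
/- The finite distribution functor D : Type u ⥤ Type u preserves filtered colimits (i.e., D is ω-accessible). -/
open CategoryTheory
open scoped NNReal

universe u

/-- The finite distribution functor `D : Type u ⥤ Type u`, sending `X` to the type of
finitely supported probability distributions on `X`, and `f` to the pushforward
`Finsupp.mapDomain f`. -/
noncomputable def DistFunctor : Type u ⥤ Type u where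
  obj X := { d : X →₀ ℝ≥0 // ∑ x ∈ d.support, d x = 1 }
  map f := TypeCat.ofHom fun d => ⟨Finsupp.mapDomain f d.1, by
    have h : (Finsupp.mapDomain f d.1).sum (fun _ v => v) = d.1.sum (fun _ v => v) :=
      Finsupp.sum_mapDomain_index (fun _ => rfl) (fun _ _ _ => rfl)
    simpa [Finsupp.sum] using h.trans (by simpa [Finsupp.sum] using d.2)⟩
  map_id X := by
    refine ConcreteCategory.hom_ext _ _ fun d => ?_
    exact Subtype.ext Finsupp.mapDomain_id
  map_comp f g := by
    refine ConcreteCategory.hom_ext _ _ fun d => ?_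
    exact Subtype.ext (Finsupp.mapDomain_comp (v := d.1) (f := fun x => f x) (g := fun x => g x))

/-!
A finitely supported function on a filtered colimit `colim F` involves finitely many points, so
it lifts to some stage `F.obj j`. If two finitely supported functions on a stage have the same
pushforward to the colimit, then at a later stage the coprojection to the colimit is injective on
the image of their supports, and their pushforwards to that stage agree. Hence `X ↦ (X →₀ M)`
preserves filtered colimits, and this restricts to distributions because pushforward leaves the
total mass unchanged.
-/

universe w w' v

section FilteredColimit

open Limits

variable {J : Type w} [Category.{w'} J] {F : J ⥤ Type u} {t : Cocone F}

theorem exists_injOn_ι_app_image [IsFilteredOrEmpty J] (ht : IsColimit t) {i : J}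
    (s : Finset (F.obj i)) :
    ∃ (k : J) (f : i ⟶ k), Set.InjOn (t.ι.app k) (F.map f '' s) := by
  classical
  have identify (p : F.obj i × F.obj i) :
      ∃ u : Under i, t.ι.app i p.1 = t.ι.app i p.2 → F.map u.hom p.1 = F.map u.hom p.2 := by
    by_cases hp : t.ι.app i p.1 = t.ι.app i p.2
    · obtain ⟨j, f, hf⟩ := (Types.FilteredColimit.isColimit_eq_iff' ht p.1 p.2).1 hp
      exact ⟨Under.mk f, fun _ => hf⟩
    · exact ⟨Under.mk (𝟙 i), fun h => absurd h hp⟩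
  -- `Under i` is filtered, so one arrow out of `i` performs all the finitely many identifications.
  choose u hu using identify
  obtain ⟨m, hm⟩ := IsFiltered.sup_objs_exists ((s ×ˢ s).image u)
  refine ⟨m.right, m.hom, ?_⟩
  rintro _ ⟨a, ha, rfl⟩ _ ⟨b, hb, rfl⟩ hab
  have hab_i : t.ι.app i a = t.ι.app i b := by
    rw [← t.w m.hom]
    exact hab
  obtain ⟨g⟩ := hm (Finset.mem_image_of_mem u (Finset.mk_mem_product ha hb))
  rw [← Under.w g, Functor.map_comp]
  exact congrArg (F.map g.right) (hu (a, b) hab_i)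

variable {M : Type v} [AddCommMonoid M]

variable (t) in
theorem mapDomain_ι_app_mapDomain_map {i j : J} (f : i ⟶ j) (x : F.obj i →₀ M) :
    Finsupp.mapDomain (t.ι.app j) (Finsupp.mapDomain (F.map f) x) =
      Finsupp.mapDomain (t.ι.app i) x := by
  rw [← Finsupp.mapDomain_comp]
  exact Finsupp.mapDomain_congr fun a _ => ConcreteCategory.congr_hom (t.w f) a

theorem exists_mapDomain_ι_app_eq [IsFiltered J] (ht : IsColimit t) (d : t.pt →₀ M) :
    ∃ (j : J) (e : F.obj j →₀ M), Finsupp.mapDomain (t.ι.app j) e = d := by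
  induction d using Finsupp.induction_linear with
  | zero => exact ⟨IsFiltered.nonempty.some, 0, Finsupp.mapDomain_zero⟩
  | single p r =>
    obtain ⟨j, y, rfl⟩ := Types.jointly_surjective_of_isColimit ht p
    exact ⟨j, Finsupp.single y r, Finsupp.mapDomain_single⟩
  | add d₁ d₂ h₁ h₂ =>
    obtain ⟨j₁, e₁, rfl⟩ := h₁
    obtain ⟨j₂, e₂, rfl⟩ := h₂
    refine ⟨IsFiltered.max j₁ j₂,
      Finsupp.mapDomain (F.map (IsFiltered.leftToMax j₁ j₂)) e₁ +
        Finsupp.mapDomain (F.map (IsFiltered.rightToMax j₁ j₂)) e₂, ?_⟩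
    rw [Finsupp.mapDomain_add, mapDomain_ι_app_mapDomain_map, mapDomain_ι_app_mapDomain_map]

theorem exists_mapDomain_map_eq [IsFilteredOrEmpty J] (ht : IsColimit t) {i : J}
    {x y : F.obj i →₀ M}
    (h : Finsupp.mapDomain (t.ι.app i) x = Finsupp.mapDomain (t.ι.app i) y) :
    ∃ (k : J) (f : i ⟶ k), Finsupp.mapDomain (F.map f) x = Finsupp.mapDomain (F.map f) y := by
  classical
  obtain ⟨k, f, hinj⟩ := exists_injOn_ι_app_image ht (x.support ∪ y.support)
  have support_subset {z : F.obj i →₀ M} (hz : z.support ⊆ x.support ∪ y.support) :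
      ((Finsupp.mapDomain (F.map f) z).support : Set (F.obj k)) ⊆
        F.map f '' (x.support ∪ y.support : Finset (F.obj i)) := by
    rw [← Finset.coe_image, Finset.coe_subset]
    exact Finsupp.mapDomain_support.trans (Finset.image_subset_image hz)
  refine ⟨k, f, Finsupp.mapDomain_injOn _ hinj (support_subset Finset.subset_union_left)
    (support_subset Finset.subset_union_right) ?_⟩
  rw [mapDomain_ι_app_mapDomain_map, mapDomain_ι_app_mapDomain_map, h]

end FilteredColimit

theorem distFunctor_preservesFilteredColimits_general :
    Limits.PreservesFilteredColimitsOfSize.{w', w} DistFunctor.{u} := by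
  refine ⟨fun J _ _ => ⟨fun {F} => ⟨fun {t} ht => ⟨?_⟩⟩⟩⟩
  refine Limits.Types.FilteredColimit.isColimitOf' _ _ ?surjective ?injective
  case surjective =>
    rintro ⟨d, hd⟩
    obtain ⟨j, e, rfl⟩ := exists_mapDomain_ι_app_eq ht d
    have he : ∑ a ∈ e.support, e a = 1 := (Finsupp.degree_mapDomain _ e).symm.trans hd
    exact ⟨j, ⟨e, he⟩, rfl⟩
  case injective =>
    rintro i ⟨x, _⟩ ⟨y, _⟩ hxy
    obtain ⟨k, f, hf⟩ := exists_mapDomain_map_eq ht (congrArg Subtype.val hxy)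
    exact ⟨k, f, Subtype.ext hf⟩

/-- The finite distribution functor is `ω`-accessible: it preserves filtered colimits. -/
theorem distFunctor_preservesFilteredColimits :
    Limits.PreservesFilteredColimits DistFunctor.{u} :=
  distFunctor_preservesFilteredColimits_general
end
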